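/- Let (X_i)_{i≥1} be i.i.d. standard normal, X_{(n)} = max_{1≤i≤n} X_i, and Y_n = a_n(X_{(n)} - b_n) with a_n = √(2 log n) and b_n = √(2 log n) - (log log n + log(4π))/(2√(2 log n)). Then the Kullback–Leibler divergence of the law of Y_n from the standard Gumbel distribution Λ satisfies D_KL(L(Y_n) | Λ) = ((log log n)⁴/(512 (log n)²))(1 + o(1)) as n → ∞. -/

import Mathlib

open MeasureTheory Filter Real

/-- The standard normal cumulative distribution function. -/
noncomputable def stdNormalCDF (x : ℝ) : ℝ :=
  ∫ t in Set.Iic x, Real.exp (-t ^ 2 / 2) / Real.sqrt (2 * Real.pi)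

/-- The standard normal density. -/
noncomputable def stdNormalPDF (x : ℝ) : ℝ :=
  Real.exp (-x ^ 2 / 2) / Real.sqrt (2 * Real.pi)

/-- Scaling constant `a_n = √(2 log n)`. -/
noncomputable def aSeq (n : ℕ) : ℝ := Real.sqrt (2 * Real.log n)

/-- Centering constant
`b_n = √(2 log n) - (log log n + log (4π)) / (2 √(2 log n))`. -/
noncomputable def bSeq (n : ℕ) : ℝ :=
  aSeq n - (Real.log (Real.log n) + Real.log (4 * Real.pi)) / (2 * aSeq n)

/-- `c_n = log (√(4 π log n))`. -/
noncomputable def cSeq (n : ℕ) : ℝ := Real.log (Real.sqrt (4 * Real.pi * Real.log n))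

/-- The CDF of `Y_n = a_n (X_{(n)} - b_n)` where `X_{(n)}` is the maximum of `n`
i.i.d. standard normal random variables: `P(Y_n ≤ x) = Φ(b_n + x/a_n)^n`. -/
noncomputable def Fmax (n : ℕ) (x : ℝ) : ℝ := stdNormalCDF (bSeq n + x / aSeq n) ^ n

/-- The density of `Y_n = a_n (X_{(n)} - b_n)`:
`f_n(x) = n a_n⁻¹ φ(b_n + x/a_n) Φ(b_n + x/a_n)^{n-1}`. -/
noncomputable def fmax (n : ℕ) (x : ℝ) : ℝ :=
  n * (aSeq n)⁻¹ * stdNormalPDF (bSeq n + x / aSeq n) *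
    stdNormalCDF (bSeq n + x / aSeq n) ^ (n - 1)

/-- The density of the standard Gumbel distribution. -/
noncomputable def gumbelPDF (x : ℝ) : ℝ := Real.exp (-x - Real.exp (-x))

/-!
Writing `λ` for the Gumbel density, the divergence is `∫ λ · klFun (f_n / λ)`, and
`klFun u ∼ (log u)² / 2` as `u → 1`. At `z = b_n + x / a_n = a_n + (x - c_n) / a_n` the density
factor of `f_n` is `exp (-x - t)` with `t = (x - c_n)² / (2 a_n²)`, and the Mills ratio gives
`n (1 - Φ z) ≈ exp (-x - t)`, so that `log (f_n / λ) ≈ exp (-x) (1 - exp (-t)) - t`. Since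
`t ∼ δ_n = c_n² / (2 a_n²)` while the Mills ratio contributes only a relative error
`O(c_n / a_n²) = o(δ_n)`, one gets `log (f_n / λ) / δ_n → exp (-x) - 1`. Under the Gumbel law
`exp (-x)` is exponential of mean `1`, hence of variance `1`, and the divergence is
asymptotic to `δ_n² / 2`.
-/

open Set InformationTheory ProbabilityTheory
open scoped Topology

section QuadraticAsymptotics

lemma klFun_le_sq_log_mul {u : ℝ} (hu : 0 < u) : klFun u ≤ log u ^ 2 * (1 + u) := by
  have h_upper : log u ≤ u - 1 := log_le_sub_one_of_pos hu
  rw [klFun_apply]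
  rcases le_total 0 (log u) with hlog | hlog <;> nlinarith [mul_nonneg (sq_nonneg (log u)) hu.le]

lemma abs_klFun_sub_half_sq_log_le {u : ℝ} (hu : 0 < u) (hlog : |log u| ≤ 1) :
    |klFun u - log u ^ 2 / 2| ≤ 2 * |log u| ^ 3 := by
  have h_taylor := Real.exp_bound hlog (n := 3) (by norm_num)
  simp only [Finset.sum_range_succ, Finset.range_zero, Finset.sum_empty, Nat.factorial,
    exp_log hu] at h_taylor
  norm_num at h_taylor
  set L := log u
  set r := u - (1 + L + L ^ 2 / 2)
  have h_factor : |L - 1| ≤ 2 := by linarith [abs_sub L 1, abs_one (α := ℝ)]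
  calc |klFun u - L ^ 2 / 2| = |L ^ 3 / 2 + (L - 1) * r| := by rw [klFun_apply]; congr 1; ring
    _ ≤ |L ^ 3 / 2| + |(L - 1) * r| := abs_add_le _ _
    _ = |L| ^ 3 / 2 + |L - 1| * |r| := by rw [abs_div, abs_pow, abs_mul, abs_two]
    _ ≤ |L| ^ 3 / 2 + 2 * (|L| ^ 3 * (2 / 9)) := by gcongr
    _ ≤ 2 * |L| ^ 3 := by linarith [pow_nonneg (abs_nonneg L) 3]

lemma tendsto_klFun_div_sq {ι : Type*} {l : Filter ι} {u δ : ι → ℝ} {L : ℝ}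
    (hu : ∀ᶠ i in l, 0 < u i) (hδ : Tendsto δ l (𝓝 0)) (hδ₀ : ∀ᶠ i in l, δ i ≠ 0)
    (hlog : Tendsto (fun i ↦ log (u i) / δ i) l (𝓝 L)) :
    Tendsto (fun i ↦ klFun (u i) / δ i ^ 2) l (𝓝 (L ^ 2 / 2)) := by
  have hlog₀ : Tendsto (fun i ↦ |log (u i)|) l (𝓝 0) := by
    have h := (hlog.mul hδ).abs
    rw [mul_zero, abs_zero] at h
    refine h.congr' ?_
    filter_upwards [hδ₀] with i hi
    rw [div_mul_cancel₀ _ hi]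
  have h_error : Tendsto (fun i ↦ klFun (u i) / δ i ^ 2 - (log (u i) / δ i) ^ 2 / 2) l (𝓝 0) := by
    have h_bound := ((hlog.abs.pow 2).mul hlog₀).const_mul 2
    rw [mul_zero, mul_zero] at h_bound
    refine squeeze_zero_norm' ?_ h_bound
    filter_upwards [hu, hδ₀, hlog₀.eventually_le_const one_pos] with i hui hi hlog_le
    calc ‖klFun (u i) / δ i ^ 2 - (log (u i) / δ i) ^ 2 / 2‖
        = |klFun (u i) - log (u i) ^ 2 / 2| / |δ i| ^ 2 := by
          rw [norm_eq_abs, ← abs_pow, ← abs_div]; congr 1; field_simp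
      _ ≤ 2 * |log (u i)| ^ 3 / |δ i| ^ 2 := by
          gcongr; exact abs_klFun_sub_half_sq_log_le hui hlog_le
      _ = 2 * (|log (u i) / δ i| ^ 2 * |log (u i)|) := by rw [abs_div]; ring
  simpa using h_error.add ((hlog.pow 2).div_const 2)

variable {α : Type*} [MeasurableSpace α] {μ : Measure α}

lemma integral_mul_log_div_eq_integral_mul_klFun {f g : α → ℝ} (hf : Integrable f μ)
    (hg : Integrable g μ) (hg₀ : ∀ x, g x ≠ 0) (hfg : ∫ x, f x ∂μ = ∫ x, g x ∂μ)
    (hkl : Integrable (fun x ↦ g x * klFun (f x / g x)) μ) :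
    ∫ x, f x * log (f x / g x) ∂μ = ∫ x, g x * klFun (f x / g x) ∂μ := by
  have h_eq (x : α) : f x * log (f x / g x) = g x * klFun (f x / g x) + (f x - g x) := by
    have := hg₀ x
    rw [klFun_apply]
    field_simp
    ring
  have h_sub : Integrable (fun x ↦ f x - g x) μ := hf.sub hg
  simp_rw [h_eq]
  rw [integral_add hkl h_sub, integral_sub hf hg, hfg, sub_self, add_zero]

theorem tendsto_integral_mul_log_div_div_sq {ι : Type*} {l : Filter ι} [l.IsCountablyGenerated]
    {f : ι → α → ℝ} {g h bound : α → ℝ} {δ : ι → ℝ}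
    (hf : ∀ᶠ i in l, Integrable (f i) μ) (hf₀ : ∀ᶠ i in l, ∀ x, 0 < f i x)
    (hg : Integrable g μ) (hg₀ : ∀ x, 0 < g x) (hfg : ∀ᶠ i in l, ∫ x, f i x ∂μ = ∫ x, g x ∂μ)
    (hδ : Tendsto δ l (𝓝 0)) (hδ₀ : ∀ᶠ i in l, δ i ≠ 0) (hbound : Integrable bound μ)
    (hkl : ∀ᶠ i in l, ∀ x, g x * klFun (f i x / g x) ≤ δ i ^ 2 * bound x)
    (hlog : ∀ x, Tendsto (fun i ↦ log (f i x / g x) / δ i) l (𝓝 (h x))) :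
    Tendsto (fun i ↦ (∫ x, f i x * log (f i x / g x) ∂μ) / δ i ^ 2) l
      (𝓝 (∫ x, g x * (h x ^ 2 / 2) ∂μ)) := by
  have h_meas : ∀ᶠ i in l, AEStronglyMeasurable (fun x ↦ g x * klFun (f i x / g x)) μ := by
    filter_upwards [hf] with i hfi
    exact hg.1.mul (measurable_klFun.comp_aemeasurable
      (hfi.1.aemeasurable.div hg.1.aemeasurable)).aestronglyMeasurable
  have h_nonneg : ∀ᶠ i in l, ∀ x, 0 ≤ g x * klFun (f i x / g x) := by
    filter_upwards [hf₀] with i hfi x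
    exact mul_nonneg (hg₀ x).le (klFun_nonneg (div_pos (hfi x) (hg₀ x)).le)
  have h_lim : Tendsto (fun i ↦ ∫ x, g x * klFun (f i x / g x) / δ i ^ 2 ∂μ) l
      (𝓝 (∫ x, g x * (h x ^ 2 / 2) ∂μ)) := by
    refine tendsto_integral_filter_of_dominated_convergence bound ?_ ?_ hbound ?_
    · filter_upwards [h_meas] with i hi
      simpa only [div_eq_mul_inv] using hi.mul_const _
    · filter_upwards [h_nonneg, hδ₀, hkl] with i hi hδi hkli
      refine ae_of_all _ fun x ↦ ?_
      rw [norm_of_nonneg (div_nonneg (hi x) (sq_nonneg _)), div_le_iff₀' (by positivity)]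
      exact hkli x
    · refine ae_of_all _ fun x ↦ ?_
      simp_rw [mul_div_assoc]
      refine (tendsto_klFun_div_sq ?_ hδ hδ₀ (hlog x)).const_mul _
      filter_upwards [hf₀] with i hfi using div_pos (hfi x) (hg₀ x)
  refine h_lim.congr' ?_
  filter_upwards [hf, hfg, h_meas, h_nonneg, hkl] with i hfi hfgi h_measi hi hkli
  have h_int : Integrable (fun x ↦ g x * klFun (f i x / g x)) μ := by
    refine (hbound.const_mul (δ i ^ 2)).mono' h_measi (ae_of_all _ fun x ↦ ?_)
    rw [norm_of_nonneg (hi x)]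
    exact hkli x
  rw [integral_div,
    integral_mul_log_div_eq_integral_mul_klFun hfi hg (fun x ↦ (hg₀ x).ne') hfgi h_int]

end QuadraticAsymptotics

lemma integrable_of_hasDerivAt_of_nonneg {F f : ℝ → ℝ} {A B : ℝ}
    (hderiv : ∀ x, HasDerivAt F (f x) x) (hf : ∀ x, 0 ≤ f x)
    (hbot : Tendsto F atBot (𝓝 A)) (htop : Tendsto F atTop (𝓝 B)) : Integrable f := by
  have h_Ioi : IntegrableOn f (Ioi 0) :=
    integrableOn_Ioi_deriv_of_nonneg' (fun x _ ↦ hderiv x) (fun x _ ↦ hf x) htop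
  have h_Iio : IntegrableOn f (Iio 0) := by
    have h_refl (x : ℝ) : HasDerivAt (fun y ↦ -F (-y)) (f (-x)) x :=
      ((hderiv (-x)).comp x (hasDerivAt_neg x)).neg.congr_deriv (by ring)
    have h : IntegrableOn (fun x ↦ f (-x)) (Ioi (-0)) :=
      integrableOn_Ioi_deriv_of_nonneg' (fun x _ ↦ h_refl x) (fun x _ ↦ hf (-x))
        (hbot.comp tendsto_neg_atTop_atBot).neg
    simpa only [neg_neg] using h.comp_neg_Iio
  rw [← integrableOn_Iic_iff_integrableOn_Iio] at h_Iio
  simpa using h_Iio.union h_Ioi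

section StandardNormal

lemma stdNormalPDF_eq_gaussianPDFReal : stdNormalPDF = gaussianPDFReal 0 1 := by
  ext x
  simp [stdNormalPDF, gaussianPDFReal_def, div_eq_inv_mul]

lemma stdNormalCDF_eq_cdf : stdNormalCDF = cdf (gaussianReal 0 1) := by
  ext x
  have h : stdNormalCDF x = ∫ t in Iic x, gaussianPDFReal 0 1 t := by
    rw [← stdNormalPDF_eq_gaussianPDFReal]; rfl
  rw [h, cdf_eq_real, measureReal_def, gaussianReal_apply_eq_integral 0 one_ne_zero,
    ENNReal.toReal_ofReal (integral_nonneg (gaussianPDFReal_nonneg 0 1))]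

lemma stdNormalPDF_pos (x : ℝ) : 0 < stdNormalPDF x := by
  unfold stdNormalPDF; positivity

lemma continuous_stdNormalPDF : Continuous stdNormalPDF := by
  unfold stdNormalPDF; fun_prop

lemma integrable_stdNormalPDF : Integrable stdNormalPDF :=
  stdNormalPDF_eq_gaussianPDFReal ▸ integrable_gaussianPDFReal 0 1

lemma hasDerivAt_stdNormalPDF (x : ℝ) : HasDerivAt stdNormalPDF (-x * stdNormalPDF x) x := by
  have h_exponent : HasDerivAt (fun y : ℝ ↦ -y ^ 2 / 2) (-x) x :=
    ((hasDerivAt_pow 2 x).neg.div_const 2).congr_deriv (by ring)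
  exact (h_exponent.exp.div_const √(2 * π)).congr_deriv (by unfold stdNormalPDF; ring)

lemma hasDerivAt_stdNormalCDF (x : ℝ) : HasDerivAt stdNormalCDF (stdNormalPDF x) x := by
  have h_eq : stdNormalCDF = fun u ↦ stdNormalCDF 0 + ∫ t in (0 : ℝ)..u, stdNormalPDF t := by
    ext u
    rw [← intervalIntegral.integral_Iic_sub_Iic integrable_stdNormalPDF.integrableOn
      integrable_stdNormalPDF.integrableOn]
    exact (add_sub_cancel (stdNormalCDF 0) (stdNormalCDF u)).symm
  rw [h_eq]
  exact (continuous_stdNormalPDF.integral_hasStrictDerivAt 0 x).hasDerivAt.const_add _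

lemma tendsto_stdNormalCDF_atBot : Tendsto stdNormalCDF atBot (𝓝 0) :=
  stdNormalCDF_eq_cdf ▸ tendsto_cdf_atBot _

lemma tendsto_stdNormalCDF_atTop : Tendsto stdNormalCDF atTop (𝓝 1) :=
  stdNormalCDF_eq_cdf ▸ tendsto_cdf_atTop _

lemma strictMono_stdNormalCDF : StrictMono stdNormalCDF :=
  strictMono_of_hasDerivAt_pos hasDerivAt_stdNormalCDF stdNormalPDF_pos

lemma stdNormalCDF_pos (x : ℝ) : 0 < stdNormalCDF x :=
  (strictMono_stdNormalCDF.monotone.le_of_tendsto tendsto_stdNormalCDF_atBot (x - 1)).trans_lt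
    (strictMono_stdNormalCDF (sub_one_lt x))

lemma stdNormalCDF_lt_one (x : ℝ) : stdNormalCDF x < 1 :=
  (strictMono_stdNormalCDF (lt_add_one x)).trans_le
    (strictMono_stdNormalCDF.monotone.ge_of_tendsto tendsto_stdNormalCDF_atTop (x + 1))

lemma tendsto_stdNormalPDF_atTop : Tendsto stdNormalPDF atTop (𝓝 0) := by
  have h_exponent : Tendsto (fun x : ℝ ↦ -x ^ 2 / 2) atTop atBot :=
    (tendsto_neg_atTop_atBot.comp (tendsto_pow_atTop two_ne_zero)).atBot_div_const two_pos
  have h := (tendsto_exp_atBot.comp h_exponent).div_const √(2 * π)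
  rw [zero_div] at h
  exact h

lemma stdNormalPDF_mul_le_one_sub_stdNormalCDF (z : ℝ) :
    stdNormalPDF z * (z / (1 + z ^ 2)) ≤ 1 - stdNormalCDF z := by
  let U : ℝ → ℝ := fun y ↦ 1 - stdNormalCDF y - stdNormalPDF y * (y / (1 + y ^ 2))
  have hU_deriv (y : ℝ) : HasDerivAt U (-(stdNormalPDF y * (2 / (1 + y ^ 2) ^ 2))) y := by
    have h_frac : HasDerivAt (fun y : ℝ ↦ y / (1 + y ^ 2))
        ((1 * (1 + y ^ 2) - y * (2 * y)) / (1 + y ^ 2) ^ 2) y :=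
      (hasDerivAt_id y).div (by simpa using (hasDerivAt_pow 2 y).const_add 1) (by positivity)
    refine (((hasDerivAt_stdNormalCDF y).const_sub 1).sub
      ((hasDerivAt_stdNormalPDF y).mul h_frac)).congr_deriv ?_
    field_simp
    ring
  have hU_antitone : Antitone U := by
    refine antitone_of_hasDerivAt_nonpos hU_deriv fun y ↦ neg_nonpos.2 ?_
    have := stdNormalPDF_pos y
    positivity
  have hU_tendsto : Tendsto U atTop (𝓝 (1 - 1 - 0)) := by
    refine (tendsto_stdNormalCDF_atTop.const_sub 1).sub
      (squeeze_zero_norm (fun y ↦ ?_) tendsto_stdNormalPDF_atTop)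
    have h_frac : |y / (1 + y ^ 2)| ≤ 1 := by
      rw [abs_div, abs_of_pos (by positivity : 0 < 1 + y ^ 2), div_le_one (by positivity)]
      nlinarith [sq_abs y, sq_nonneg (|y| - 1)]
    rw [norm_mul, norm_of_nonneg (stdNormalPDF_pos y).le]
    exact mul_le_of_le_one_right (stdNormalPDF_pos y).le h_frac
  have h := hU_antitone.le_of_tendsto hU_tendsto z
  simp only [U] at h
  linarith

lemma one_sub_stdNormalCDF_le {z : ℝ} (hz : 0 < z) : 1 - stdNormalCDF z ≤ stdNormalPDF z / z := by
  let V : ℝ → ℝ := fun y ↦ stdNormalPDF y / y - (1 - stdNormalCDF y)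
  have hV_deriv {y : ℝ} (hy : 0 < y) : HasDerivAt V (-(stdNormalPDF y / y ^ 2)) y := by
    refine (((hasDerivAt_stdNormalPDF y).div (hasDerivAt_id y) hy.ne').sub
      ((hasDerivAt_stdNormalCDF y).const_sub 1)).congr_deriv ?_
    simp only [id]
    field_simp
    ring
  have hV_antitone : AntitoneOn V (Ioi 0) := by
    refine antitoneOn_of_hasDerivWithinAt_nonpos (f' := fun y ↦ -(stdNormalPDF y / y ^ 2))
      (convex_Ioi 0) (fun y hy ↦ (hV_deriv hy).continuousAt.continuousWithinAt) ?_ ?_ <;>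
    · intro y hy
      rw [interior_Ioi] at hy
      first
        | exact (hV_deriv hy).hasDerivWithinAt
        | exact neg_nonpos.2 (div_nonneg (stdNormalPDF_pos y).le (sq_nonneg y))
  have hV_tendsto : Tendsto V atTop (𝓝 (0 - (1 - 1))) :=
    (tendsto_stdNormalPDF_atTop.div_atTop tendsto_id).sub (tendsto_stdNormalCDF_atTop.const_sub 1)
  have h : 0 - (1 - 1) ≤ V z := by
    refine le_of_tendsto hV_tendsto ?_
    filter_upwards [eventually_ge_atTop z] with y hy
    exact hV_antitone hz (hz.trans_le hy) hy
  simp only [V] at h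
  linarith

lemma one_sub_stdNormalCDF_le_half {z : ℝ} (hz : 1 ≤ z) : 1 - stdNormalCDF z ≤ 1 / 2 := by
  have h_pdf : stdNormalPDF z ≤ 1 / 2 := by
    have h_sqrt : 2 ≤ √(2 * π) := le_sqrt_of_sq_le (by linarith [pi_gt_three])
    have h_exp : exp (-z ^ 2 / 2) ≤ 1 := exp_le_one_iff.2 (by linarith [sq_nonneg z])
    unfold stdNormalPDF
    gcongr
  calc 1 - stdNormalCDF z ≤ stdNormalPDF z / z := one_sub_stdNormalCDF_le (by linarith)
    _ ≤ stdNormalPDF z := div_le_self (stdNormalPDF_pos z).le hz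
    _ ≤ 1 / 2 := h_pdf

end StandardNormal

section Gumbel

lemma gumbelPDF_pos (x : ℝ) : 0 < gumbelPDF x := exp_pos _

lemma gumbelPDF_eq_mul (x : ℝ) : gumbelPDF x = exp (-x) * exp (-exp (-x)) := by
  rw [gumbelPDF, sub_eq_add_neg, exp_add]

lemma hasDerivAt_exp_neg (x : ℝ) : HasDerivAt (fun y ↦ exp (-y)) (-exp (-x)) x :=
  (hasDerivAt_neg x).exp.congr_deriv (by ring)

lemma hasDerivAt_exp_neg_exp_neg (x : ℝ) :
    HasDerivAt (fun y ↦ exp (-exp (-y))) (gumbelPDF x) x :=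
  (hasDerivAt_exp_neg x).fun_neg.exp.congr_deriv (by rw [gumbelPDF_eq_mul, neg_neg, mul_comm])

lemma tendsto_exp_neg_atBot : Tendsto (fun x : ℝ ↦ exp (-x)) atBot atTop :=
  tendsto_exp_atTop.comp tendsto_neg_atBot_atTop

lemma tendsto_exp_neg_exp_neg_atBot : Tendsto (fun x ↦ exp (-exp (-x))) atBot (𝓝 0) :=
  tendsto_exp_neg_atTop_nhds_zero.comp tendsto_exp_neg_atBot

lemma tendsto_exp_neg_exp_neg_atTop : Tendsto (fun x ↦ exp (-exp (-x))) atTop (𝓝 1) := by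
  have h := (continuous_exp.tendsto _).comp tendsto_exp_neg_atTop_nhds_zero.neg
  rwa [neg_zero, exp_zero] at h

lemma integrable_gumbelPDF : Integrable gumbelPDF :=
  integrable_of_hasDerivAt_of_nonneg hasDerivAt_exp_neg_exp_neg (fun x ↦ (gumbelPDF_pos x).le)
    tendsto_exp_neg_exp_neg_atBot tendsto_exp_neg_exp_neg_atTop

lemma integral_gumbelPDF : ∫ x, gumbelPDF x = 1 := by
  rw [integral_of_hasDerivAt_of_tendsto hasDerivAt_exp_neg_exp_neg integrable_gumbelPDF
    tendsto_exp_neg_exp_neg_atBot tendsto_exp_neg_exp_neg_atTop, sub_zero]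

lemma integral_gumbelPDF_mul_sq_half : ∫ x, gumbelPDF x * ((exp (-x) - 1) ^ 2 / 2) = 1 / 2 := by
  let P : ℝ → ℝ := fun x ↦ (exp (-x) ^ 2 + 1) * exp (-exp (-x)) / 2
  have hP_deriv (x : ℝ) : HasDerivAt P (gumbelPDF x * ((exp (-x) - 1) ^ 2 / 2)) x := by
    refine (((((hasDerivAt_exp_neg x).pow 2).add_const 1).mul
      (hasDerivAt_exp_neg_exp_neg x)).div_const 2).congr_deriv ?_
    rw [gumbelPDF_eq_mul]
    simp only [Pi.pow_apply]
    ring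
  have hP_bot : Tendsto P atBot (𝓝 0) := by
    have h₂ := (tendsto_pow_mul_exp_neg_atTop_nhds_zero 2).comp tendsto_exp_neg_atBot
    have h := (h₂.add tendsto_exp_neg_exp_neg_atBot).div_const 2
    rw [add_zero, zero_div] at h
    refine h.congr fun x ↦ ?_
    simp only [P, Function.comp]
    ring
  have hP_top : Tendsto P atTop (𝓝 (1 / 2)) := by
    have h := (((tendsto_exp_neg_atTop_nhds_zero.pow 2).add_const 1).mul
      tendsto_exp_neg_exp_neg_atTop).div_const 2
    rwa [zero_pow two_ne_zero, zero_add, one_mul] at h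
  have hP_int : Integrable fun x ↦ gumbelPDF x * ((exp (-x) - 1) ^ 2 / 2) :=
    integrable_of_hasDerivAt_of_nonneg hP_deriv
      (fun x ↦ mul_nonneg (gumbelPDF_pos x).le (by positivity)) hP_bot hP_top
  rw [integral_of_hasDerivAt_of_tendsto hP_deriv hP_int hP_bot hP_top, sub_zero]

end Gumbel

section NormalizedMaximum

/-- The value `b_n + x / a_n` of the maximum `X_{(n)}` at which `Y_n` equals `x`. -/
noncomputable def zSeq (n : ℕ) (x : ℝ) : ℝ := bSeq n + x / aSeq n

/-- The probability `1 - Φ(b_n + x / a_n)` that a single observation pushes `Y_n` above `x`. -/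
noncomputable def tailProb (n : ℕ) (x : ℝ) : ℝ := 1 - stdNormalCDF (zSeq n x)

/-- The quadratic term `(x - c_n)² / (2 a_n²)` in the expansion of `z² / 2` around `z = a_n`,
at `z = b_n + x / a_n`. -/
noncomputable def quadTerm (n : ℕ) (x : ℝ) : ℝ := (x - cSeq n) ^ 2 / (2 * aSeq n ^ 2)

/-- The rate `δ_n = c_n² / (2 a_n²)` at which `log (f_n / λ)` tends to zero. -/
noncomputable def deltaSeq (n : ℕ) : ℝ := cSeq n ^ 2 / (2 * aSeq n ^ 2)

variable {n : ℕ}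

lemma log_natCast_pos (ha : 0 < aSeq n) : 0 < log n := by
  linarith [sqrt_pos.1 (show 0 < √(2 * log n) from ha)]

lemma one_lt_natCast (ha : 0 < aSeq n) : (1 : ℝ) < n :=
  (log_pos_iff n.cast_nonneg).1 (log_natCast_pos ha)

lemma aSeq_sq (ha : 0 < aSeq n) : aSeq n ^ 2 = 2 * log n :=
  sq_sqrt (by linarith [log_natCast_pos ha])

lemma natCast_eq_exp (ha : 0 < aSeq n) : (n : ℝ) = exp (aSeq n ^ 2 / 2) := by
  rw [aSeq_sq ha, mul_div_cancel_left₀ _ two_ne_zero, exp_log (by linarith [one_lt_natCast ha])]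

lemma natCast_sub_one (ha : 0 < aSeq n) : ((n - 1 : ℕ) : ℝ) = n - 1 :=
  Nat.cast_pred (by exact_mod_cast one_pos.trans (one_lt_natCast ha))

lemma exp_cSeq (ha : 0 < aSeq n) : exp (cSeq n) = √(2 * π) * aSeq n := by
  have := log_natCast_pos ha
  rw [cSeq, exp_log (by positivity), aSeq, ← sqrt_mul (by positivity)]
  ring_nf

lemma cSeq_eq (ha : 0 < aSeq n) : cSeq n = (log (log n) + log (4 * π)) / 2 := by
  rw [cSeq, log_sqrt (by have := log_natCast_pos ha; positivity),
    log_mul (by positivity) (log_natCast_pos ha).ne', add_comm]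

lemma zSeq_eq (ha : 0 < aSeq n) (x : ℝ) : zSeq n x = aSeq n + (x - cSeq n) / aSeq n := by
  rw [zSeq, bSeq, cSeq_eq ha]
  field_simp
  ring

lemma tailProb_pos (n : ℕ) (x : ℝ) : 0 < tailProb n x :=
  sub_pos.2 (stdNormalCDF_lt_one _)

lemma tailProb_lt_one (n : ℕ) (x : ℝ) : tailProb n x < 1 :=
  sub_lt_self 1 (stdNormalCDF_pos _)

lemma quadTerm_nonneg (n : ℕ) (x : ℝ) : 0 ≤ quadTerm n x := by
  unfold quadTerm; positivity

lemma natCast_mul_stdNormalPDF_zSeq (ha : 0 < aSeq n) (x : ℝ) :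
    n * stdNormalPDF (zSeq n x) = aSeq n * exp (-x - quadTerm n x) := by
  have h_exponent : -x - quadTerm n x
      = aSeq n ^ 2 / 2 + -zSeq n x ^ 2 / 2 - cSeq n := by
    rw [zSeq_eq ha, quadTerm]
    field_simp
    ring
  rw [h_exponent, exp_sub, exp_add, exp_cSeq ha, ← natCast_eq_exp ha, stdNormalPDF]
  field_simp

lemma fmax_eq (ha : 0 < aSeq n) (x : ℝ) :
    fmax n x = exp (-x - quadTerm n x) * (1 - tailProb n x) ^ (n - 1) := by
  have h : (n : ℝ) * (aSeq n)⁻¹ * stdNormalPDF (zSeq n x) = exp (-x - quadTerm n x) := by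
    rw [mul_right_comm, natCast_mul_stdNormalPDF_zSeq ha]
    field_simp
  rw [tailProb, sub_sub_cancel, ← h]
  rfl

lemma fmax_pos (ha : 0 < aSeq n) (x : ℝ) : 0 < fmax n x :=
  fmax_eq ha x ▸ mul_pos (exp_pos _) (pow_pos (sub_pos.2 (tailProb_lt_one n x)) _)

lemma log_fmax_div_gumbelPDF (ha : 0 < aSeq n) (x : ℝ) :
    log (fmax n x / gumbelPDF x)
      = exp (-x) - quadTerm n x + (n - 1) * log (1 - tailProb n x) := by
  rw [log_div (fmax_pos ha x).ne' (gumbelPDF_pos x).ne', fmax_eq ha,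
    log_mul (exp_ne_zero _) (pow_ne_zero _ (sub_pos.2 (tailProb_lt_one n x)).ne'), log_exp, log_pow,
    natCast_sub_one ha, gumbelPDF, log_exp]
  ring

lemma hasDerivAt_Fmax (n : ℕ) (x : ℝ) : HasDerivAt (Fmax n) (fmax n x) x := by
  have h_affine : HasDerivAt (fun y ↦ bSeq n + y / aSeq n) (1 / aSeq n) x :=
    ((hasDerivAt_id x).div_const _).const_add _
  refine (((hasDerivAt_stdNormalCDF _).comp x h_affine).pow n).congr_deriv ?_
  simp only [Function.comp_apply, fmax]
  ring

lemma tendsto_Fmax_atBot (ha : 0 < aSeq n) : Tendsto (Fmax n) atBot (𝓝 0) := by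
  have h_affine : Tendsto (fun x ↦ bSeq n + x / aSeq n) atBot atBot :=
    tendsto_atBot_add_const_left _ _ (tendsto_id.atBot_div_const ha)
  have h := (tendsto_stdNormalCDF_atBot.comp h_affine).pow n
  rwa [zero_pow (by exact_mod_cast (one_pos.trans (one_lt_natCast ha)).ne')] at h

lemma tendsto_Fmax_atTop (ha : 0 < aSeq n) : Tendsto (Fmax n) atTop (𝓝 1) := by
  have h_affine : Tendsto (fun x ↦ bSeq n + x / aSeq n) atTop atTop :=
    tendsto_atTop_add_const_left _ _ (tendsto_id.atTop_div_const ha)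
  have h := (tendsto_stdNormalCDF_atTop.comp h_affine).pow n
  rwa [one_pow] at h

lemma integrable_fmax (ha : 0 < aSeq n) : Integrable (fmax n) :=
  integrable_of_hasDerivAt_of_nonneg (hasDerivAt_Fmax n) (fun x ↦ (fmax_pos ha x).le)
    (tendsto_Fmax_atBot ha) (tendsto_Fmax_atTop ha)

lemma integral_fmax (ha : 0 < aSeq n) : ∫ x, fmax n x = 1 := by
  rw [integral_of_hasDerivAt_of_tendsto (hasDerivAt_Fmax n) (integrable_fmax ha)
    (tendsto_Fmax_atBot ha) (tendsto_Fmax_atTop ha), sub_zero]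

end NormalizedMaximum

section Estimates

lemma abs_sub_one_mul_log_one_sub_add_le {m p : ℝ} (hm : 1 ≤ m) (hp₀ : 0 ≤ p) (hp : p ≤ 1 / 2) :
    |(m - 1) * log (1 - p) + m * p| ≤ p + 2 * m * p ^ 2 := by
  have h_upper : log (1 - p) ≤ -p := by linarith [log_le_sub_one_of_pos (by linarith : 0 < 1 - p)]
  have h_lower : -p - 2 * p ^ 2 ≤ log (1 - p) := by
    refine le_trans ?_ (one_sub_inv_le_log_of_pos (by linarith))
    rw [le_sub_comm, inv_le_iff_one_le_mul₀ (by linarith)]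
    nlinarith [mul_nonneg hp₀ (by linarith : 0 ≤ 1 - 2 * p), sq_nonneg p]
  rw [abs_le]
  constructor <;> nlinarith [mul_nonneg (sub_nonneg.2 hm) (sub_nonneg.2 h_upper),
    mul_nonneg (sub_nonneg.2 hm) (sub_nonneg.2 h_lower), sq_nonneg p]

lemma div_le_one_add_two_mul_abs_sub_div {a z : ℝ} (ha : 0 < a) (hz : a / 2 ≤ z) :
    a / z ≤ 1 + 2 * |z - a| / a := by
  have hz₀ : 0 < z := (half_pos ha).trans_le hz
  calc a / z = 1 + (a - z) / z := by field_simp; ring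
    _ ≤ 1 + |z - a| / (a / 2) := by
      gcongr
      exact (le_abs_self _).trans_eq (abs_sub_comm a z)
    _ = 1 + 2 * |z - a| / a := by field_simp

lemma one_sub_le_mul_div_one_add_sq {a z : ℝ} (ha : 0 < a) (hz : a / 2 ≤ z) :
    1 - (2 * |z - a| / a + 4 / a ^ 2) ≤ a * (z / (1 + z ^ 2)) := by
  have hz₀ : 0 < z := (half_pos ha).trans_le hz
  have h_abs : z * (z - a) / (1 + z ^ 2) ≤ 2 * |z - a| / a := by
    rw [div_le_div_iff₀ (by positivity) ha]
    have h₁ : z * (z - a) ≤ z * |z - a| := by gcongr; exact le_abs_self _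
    have h₂ : z * a ≤ 2 * (1 + z ^ 2) := by nlinarith
    nlinarith [mul_le_mul_of_nonneg_right h₁ ha.le,
      mul_le_mul_of_nonneg_right h₂ (abs_nonneg (z - a))]
  have h_one : 1 / (1 + z ^ 2) ≤ 4 / a ^ 2 := by
    rw [div_le_div_iff₀ (by positivity) (by positivity)]
    nlinarith
  have h_eq : a * (z / (1 + z ^ 2)) = 1 - (z * (z - a) / (1 + z ^ 2) + 1 / (1 + z ^ 2)) := by
    field_simp
    ring
  linarith

lemma abs_mul_one_sub_exp_neg_sub_le {w t : ℝ} (hw : 0 ≤ w) (ht : 0 ≤ t) :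
    |w * (1 - exp (-t)) - t| ≤ (1 + w) * t := by
  have h_le : 1 - exp (-t) ≤ t := by linarith [one_sub_le_exp_neg t]
  have h_nonneg : 0 ≤ 1 - exp (-t) := sub_nonneg.2 (exp_le_one_iff.2 (neg_nonpos.2 ht))
  rw [abs_le]
  constructor <;> nlinarith [mul_nonneg hw h_nonneg, mul_le_mul_of_nonneg_left h_le hw,
    mul_nonneg hw ht]

/-- The relative error `(2 |x - c_n| + 4) / a_n²` made by replacing `n (1 - Φ(b_n + x / a_n))`
by its leading term `exp (-x - t)`, where `t` is the quadratic term. -/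
noncomputable def tailError (n : ℕ) (x : ℝ) : ℝ := (2 * |x - cSeq n| + 4) / aSeq n ^ 2

variable {n : ℕ} {x : ℝ}

lemma natCast_mul_tailProb_le (ha : 0 < aSeq n) (hz : aSeq n / 2 ≤ zSeq n x) :
    n * tailProb n x ≤ aSeq n / zSeq n x * exp (-x - quadTerm n x) := by
  have hz₀ : 0 < zSeq n x := (half_pos ha).trans_le hz
  calc n * tailProb n x ≤ n * (stdNormalPDF (zSeq n x) / zSeq n x) := by
        gcongr; exact one_sub_stdNormalCDF_le hz₀
    _ = aSeq n / zSeq n x * exp (-x - quadTerm n x) := by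
        rw [← mul_div_assoc, natCast_mul_stdNormalPDF_zSeq ha]; ring

lemma le_natCast_mul_tailProb (ha : 0 < aSeq n) (x : ℝ) :
    aSeq n * (zSeq n x / (1 + zSeq n x ^ 2)) * exp (-x - quadTerm n x) ≤ n * tailProb n x := by
  calc aSeq n * (zSeq n x / (1 + zSeq n x ^ 2)) * exp (-x - quadTerm n x)
      = n * (stdNormalPDF (zSeq n x) * (zSeq n x / (1 + zSeq n x ^ 2))) := by
        rw [← mul_assoc (n : ℝ), natCast_mul_stdNormalPDF_zSeq ha]; ring
    _ ≤ n * tailProb n x := by gcongr; exact stdNormalPDF_mul_le_one_sub_stdNormalCDF _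

lemma exp_neg_sub_quadTerm_le : exp (-x - quadTerm n x) ≤ exp (-x) :=
  exp_le_exp.2 (sub_le_self _ (quadTerm_nonneg n x))

lemma natCast_mul_tailProb_le_two_mul (ha : 0 < aSeq n) (hz : aSeq n / 2 ≤ zSeq n x) :
    n * tailProb n x ≤ 2 * exp (-x) := by
  have h_ratio : aSeq n / zSeq n x ≤ 2 := by
    rw [div_le_iff₀ ((half_pos ha).trans_le hz)]; linarith
  calc n * tailProb n x ≤ aSeq n / zSeq n x * exp (-x - quadTerm n x) :=
        natCast_mul_tailProb_le ha hz
    _ ≤ 2 * exp (-x) := mul_le_mul h_ratio exp_neg_sub_quadTerm_le (exp_pos _).le two_pos.le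

lemma abs_natCast_mul_tailProb_sub_le (ha : 0 < aSeq n) (hz : aSeq n / 2 ≤ zSeq n x) :
    |n * tailProb n x - exp (-x - quadTerm n x)| ≤ exp (-x) * tailError n x := by
  have h_abs : 2 * |zSeq n x - aSeq n| / aSeq n + 4 / aSeq n ^ 2 = tailError n x := by
    rw [zSeq_eq ha, add_sub_cancel_left, abs_div, abs_of_pos ha, tailError]
    field_simp
  have h_upper := (natCast_mul_tailProb_le ha hz).trans
    (mul_le_mul_of_nonneg_right (div_le_one_add_two_mul_abs_sub_div ha hz) (exp_pos _).le)
  have h_lower := (mul_le_mul_of_nonneg_right (one_sub_le_mul_div_one_add_sq ha hz)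
    (exp_pos _).le).trans (le_natCast_mul_tailProb ha x)
  have h_rest : 0 ≤ 4 / aSeq n ^ 2 * exp (-x - quadTerm n x) := by positivity
  calc |n * tailProb n x - exp (-x - quadTerm n x)| ≤ exp (-x - quadTerm n x) * tailError n x := by
        rw [abs_le, ← h_abs]
        constructor <;> linarith
    _ ≤ exp (-x) * tailError n x :=
        mul_le_mul_of_nonneg_right exp_neg_sub_quadTerm_le (by unfold tailError; positivity)

lemma abs_log_fmax_div_gumbelPDF_sub_le (ha : 2 ≤ aSeq n) (hz : aSeq n / 2 ≤ zSeq n x) :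
    |log (fmax n x / gumbelPDF x) - (exp (-x) * (1 - exp (-quadTerm n x)) - quadTerm n x)|
      ≤ exp (-x) * tailError n x + (8 * exp (-x) ^ 2 + 2 * exp (-x)) / n := by
  have ha₀ : 0 < aSeq n := by linarith
  have hn := one_lt_natCast ha₀
  have hn₀ : (0 : ℝ) < n := by linarith
  set w := exp (-x)
  set p := tailProb n x
  have hp₀ : 0 < p := tailProb_pos n x
  have hp_le : p ≤ 2 * w / n := by
    rw [le_div_iff₀' hn₀]; exact natCast_mul_tailProb_le_two_mul ha₀ hz
  have h_log : |(n - 1) * log (1 - p) + n * p| ≤ p + 2 * n * p ^ 2 :=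
    abs_sub_one_mul_log_one_sub_add_le hn.le hp₀.le (one_sub_stdNormalCDF_le_half (by linarith))
  have h_remainder : p + 2 * n * p ^ 2 ≤ (8 * w ^ 2 + 2 * w) / n :=
    calc p + 2 * n * p ^ 2 ≤ 2 * w / n + 2 * n * (2 * w / n) ^ 2 := by gcongr
      _ = (8 * w ^ 2 + 2 * w) / n := by field_simp; ring
  have h_tail := abs_natCast_mul_tailProb_sub_le ha₀ hz
  have h_split : exp (-x - quadTerm n x) = w * exp (-quadTerm n x) := by
    rw [sub_eq_add_neg, exp_add]
  calc |log (fmax n x / gumbelPDF x) - (w * (1 - exp (-quadTerm n x)) - quadTerm n x)|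
      = |((n - 1) * log (1 - p) + n * p) - (n * p - exp (-x - quadTerm n x))| := by
        rw [log_fmax_div_gumbelPDF ha₀, h_split]; congr 1; ring
    _ ≤ |(n - 1) * log (1 - p) + n * p| + |n * p - exp (-x - quadTerm n x)| := abs_sub _ _
    _ ≤ w * tailError n x + (8 * w ^ 2 + 2 * w) / n := by linarith

lemma two_mul_aSeq_le_exp_cSeq (ha : 0 < aSeq n) : 2 * aSeq n ≤ exp (cSeq n) := by
  rw [exp_cSeq ha]
  gcongr
  exact le_sqrt_of_sq_le (by linarith [pi_gt_three])

lemma one_le_cSeq (ha : 4 ≤ aSeq n) : 1 ≤ cSeq n :=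
  exp_le_exp.1 (by linarith [two_mul_aSeq_le_exp_cSeq (by linarith : 0 < aSeq n), exp_one_lt_three])

lemma cSeq_le (ha : 0 < aSeq n) : cSeq n ≤ 4 / 3 * aSeq n := by
  have h_sqrt : √(2 * π) ≤ 8 / 3 := by
    rw [sqrt_le_left (by norm_num)]
    linarith [pi_lt_d2]
  have h_exp : 2 * cSeq n ≤ √(2 * π) * aSeq n := exp_cSeq ha ▸ two_mul_le_exp
  linarith [mul_le_mul_of_nonneg_right h_sqrt ha.le]

lemma inv_two_mul_aSeq_sq_le_deltaSeq (ha : 4 ≤ aSeq n) : (2 * aSeq n ^ 2)⁻¹ ≤ deltaSeq n := by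
  rw [deltaSeq, ← one_div]
  gcongr
  exact one_le_pow₀ (one_le_cSeq ha)

lemma deltaSeq_pos (ha : 4 ≤ aSeq n) : 0 < deltaSeq n :=
  (by positivity : 0 < (2 * aSeq n ^ 2)⁻¹).trans_le (inv_two_mul_aSeq_sq_le_deltaSeq ha)

lemma two_mul_aSeq_sq_le_natCast (ha : 4 ≤ aSeq n) : 2 * aSeq n ^ 2 ≤ n := by
  rw [natCast_eq_exp (by linarith)]
  nlinarith [quadratic_le_exp_of_nonneg (by positivity : 0 ≤ aSeq n ^ 2 / 2),
    mul_le_mul ha ha (by norm_num) (by linarith)]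

lemma inv_natCast_le_deltaSeq (ha : 4 ≤ aSeq n) : (n : ℝ)⁻¹ ≤ deltaSeq n := by
  refine le_trans ?_ (inv_two_mul_aSeq_sq_le_deltaSeq ha)
  gcongr
  exact two_mul_aSeq_sq_le_natCast (by linarith)

lemma quadTerm_le (ha : 4 ≤ aSeq n) (x : ℝ) : quadTerm n x ≤ 2 * deltaSeq n * (1 + x ^ 2) := by
  have hc := one_le_cSeq ha
  rw [quadTerm, deltaSeq, ← mul_div_assoc, div_mul_eq_mul_div]
  gcongr
  nlinarith [sq_nonneg (x + cSeq n), mul_le_mul_of_nonneg_right (one_le_pow₀ hc : 1 ≤ cSeq n ^ 2)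
    (sq_nonneg x)]

lemma tailError_le (ha : 4 ≤ aSeq n) (x : ℝ) : tailError n x ≤ 14 * deltaSeq n * (1 + x ^ 2) := by
  have hc := one_le_cSeq ha
  have h_abs : |x - cSeq n| ≤ |x| + cSeq n := by
    linarith [abs_sub x (cSeq n), abs_of_pos (by linarith : 0 < cSeq n)]
  have h_eq : 14 * deltaSeq n * (1 + x ^ 2) = 7 * cSeq n ^ 2 * (1 + x ^ 2) / aSeq n ^ 2 := by
    rw [deltaSeq]; ring
  rw [tailError, h_eq]
  gcongr
  nlinarith [sq_nonneg (|x| - 1), sq_abs x,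
    mul_le_mul_of_nonneg_right (one_le_pow₀ hc : 1 ≤ cSeq n ^ 2) (sq_nonneg x)]

lemma abs_log_fmax_div_gumbelPDF_le (ha : 4 ≤ aSeq n) (hz : aSeq n / 2 ≤ zSeq n x) :
    |log (fmax n x / gumbelPDF x)| ≤ deltaSeq n * (16 * (1 + x ^ 2) * (1 + exp (-x)) ^ 2) := by
  have h_expand := abs_log_fmax_div_gumbelPDF_sub_le (by linarith) hz
  set w := exp (-x)
  set t := quadTerm n x
  set δ := deltaSeq n
  have hw : 0 < w := exp_pos _
  have hδ : 0 < δ := deltaSeq_pos ha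
  have h_inv : (8 * w ^ 2 + 2 * w) / n ≤ (8 * w ^ 2 + 2 * w) * δ := by
    rw [div_eq_mul_inv]; gcongr; exact inv_natCast_le_deltaSeq ha
  have h_main : |w * (1 - exp (-t)) - t| ≤ (1 + w) * (2 * δ * (1 + x ^ 2)) :=
    (abs_mul_one_sub_exp_neg_sub_le hw.le (quadTerm_nonneg n x)).trans
      (by gcongr; exact quadTerm_le ha x)
  have h_error : w * tailError n x ≤ w * (14 * δ * (1 + x ^ 2)) := by
    gcongr; exact tailError_le ha x
  calc |log (fmax n x / gumbelPDF x)|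
      ≤ |w * (1 - exp (-t)) - t|
        + |log (fmax n x / gumbelPDF x) - (w * (1 - exp (-t)) - t)| := by
        refine (abs_add_le _ _).trans_eq' ?_; rw [add_sub_cancel]
    _ ≤ (1 + w) * (2 * δ * (1 + x ^ 2))
        + (w * (14 * δ * (1 + x ^ 2)) + (8 * w ^ 2 + 2 * w) * δ) := by linarith
    _ ≤ δ * (16 * (1 + x ^ 2) * (1 + w) ^ 2) := by
        have h_gap : 0 ≤ δ * (14 + 8 * w ^ 2 + 14 * w) := by positivity
        have h_gap' : 0 ≤ δ * x ^ 2 * (14 + 16 * w + 16 * w ^ 2) := by positivity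
        linarith

end Estimates

section Domination

/-- A common majorant of the Gumbel density and of the densities `f_n` on the region
`b_n + x / a_n ≥ a_n / 2`, with doubly exponential decay at `-∞`. -/
noncomputable def gumbelEnvelope (x : ℝ) : ℝ := 2 * exp (-x) * exp (-exp (-x / 2) / 12)

/-- The dominating function for `δ_n⁻² λ klFun (f_n / λ)`. The first summand serves the region
`b_n + x / a_n ≥ a_n / 2`, the second one (together with the first) its complement. -/
noncomputable def klBound (x : ℝ) : ℝ :=
  512 * ((1 + x ^ 2) ^ 2 * (1 + exp (-x)) ^ 4 * gumbelEnvelope x) + 36 * (x ^ 2 * exp (-|x|))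

lemma exp_neg_mul_exp_neg_le_gumbelEnvelope {x s : ℝ} (hs₀ : 0 ≤ s)
    (hs : x ≤ 0 → exp (-x / 2) / 12 ≤ s) : exp (-x) * exp (-s) ≤ gumbelEnvelope x := by
  rw [gumbelEnvelope, mul_comm 2, mul_assoc]
  gcongr
  rcases le_total x 0 with hx | hx
  · calc exp (-s) ≤ exp (-exp (-x / 2) / 12) := exp_le_exp.2 (by linarith [hs hx])
      _ ≤ 2 * exp (-exp (-x / 2) / 12) := le_mul_of_one_le_left (exp_pos _).le one_le_two
  · have h_le_one : exp (-x / 2) ≤ 1 := exp_le_one_iff.2 (by linarith)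
    have h_half : 1 / 2 ≤ exp (-exp (-x / 2) / 12) := by
      linarith [add_one_le_exp (-exp (-x / 2) / 12)]
    linarith [exp_le_one_iff.2 (neg_nonpos.2 hs₀)]

lemma gumbelPDF_le_gumbelEnvelope (x : ℝ) : gumbelPDF x ≤ gumbelEnvelope x := by
  rw [gumbelPDF_eq_mul]
  refine exp_neg_mul_exp_neg_le_gumbelEnvelope (exp_pos _).le fun hx ↦ ?_
  calc exp (-x / 2) / 12 ≤ exp (-x / 2) := div_le_self (exp_pos _).le (by norm_num)
    _ ≤ exp (-x) := exp_le_exp.2 (by linarith)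

lemma gumbelEnvelope_pos (x : ℝ) : 0 < gumbelEnvelope x := by
  unfold gumbelEnvelope; positivity

variable {n : ℕ} {x : ℝ}

lemma zSeq_lt_half_iff (ha : 0 < aSeq n) :
    zSeq n x < aSeq n / 2 ↔ x - cSeq n < -(aSeq n ^ 2 / 2) := by
  rw [zSeq_eq ha, ← lt_sub_iff_add_lt', div_lt_iff₀ ha]
  ring_nf

lemma quadTerm_le_of_nonpos (ha : 12 ≤ aSeq n) (hz : aSeq n / 2 ≤ zSeq n x) (hx : x ≤ 0) :
    quadTerm n x ≤ 1 - 3 / 8 * x := by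
  have ha₀ : 0 < aSeq n := by linarith
  have hz' : -(aSeq n ^ 2 / 2) ≤ x - cSeq n := not_lt.1 (mt (zSeq_lt_half_iff ha₀).2 hz.not_gt)
  have hc₁ : 1 ≤ cSeq n := one_le_cSeq (by linarith)
  have hc : cSeq n ≤ aSeq n ^ 2 / 8 := by nlinarith [cSeq_le ha₀]
  have hδ : cSeq n ^ 2 ≤ 2 * aSeq n ^ 2 := by nlinarith [cSeq_le ha₀]
  rw [quadTerm, div_le_iff₀ (by positivity)]
  nlinarith [mul_nonneg (neg_nonneg.2 hx) (by linarith : 0 ≤ x + aSeq n ^ 2 / 2),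
    mul_nonneg (neg_nonneg.2 hx) (sub_nonneg.2 hc)]

lemma exp_neg_half_le_natCast_mul_tailProb (ha : 12 ≤ aSeq n) (hz : aSeq n / 2 ≤ zSeq n x)
    (hx : x ≤ 0) : exp (-x / 2) / 6 ≤ n * tailProb n x := by
  have ha₀ : 0 < aSeq n := by linarith
  have h_ratio : 1 / 2 ≤ aSeq n * (zSeq n x / (1 + zSeq n x ^ 2)) := by
    have h_le : zSeq n x ≤ aSeq n := by
      have hc : 1 ≤ cSeq n := one_le_cSeq (by linarith)
      rw [zSeq_eq ha₀]
      linarith [div_nonpos_of_nonpos_of_nonneg (by linarith : x - cSeq n ≤ 0) ha₀.le]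
    rw [← mul_div_assoc, div_le_div_iff₀ two_pos (by positivity)]
    nlinarith
  have h_exp : exp (-x / 2) / 3 ≤ exp (-x - quadTerm n x) :=
    calc exp (-x / 2) / 3 ≤ exp (-x / 2) / exp 1 := by gcongr; exact exp_one_lt_three.le
      _ = exp (-x / 2 - 1) := (exp_sub _ _).symm
      _ ≤ exp (-x - quadTerm n x) :=
        exp_le_exp.2 (by linarith [quadTerm_le_of_nonpos ha hz hx])
  calc exp (-x / 2) / 6 = 1 / 2 * (exp (-x / 2) / 3) := by ring
    _ ≤ aSeq n * (zSeq n x / (1 + zSeq n x ^ 2)) * exp (-x - quadTerm n x) := by gcongr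
    _ ≤ n * tailProb n x := le_natCast_mul_tailProb ha₀ x

lemma fmax_le_exp_neg_mul (ha : 0 < aSeq n) (x : ℝ) :
    fmax n x ≤ exp (-x - quadTerm n x) * exp (-((n - 1) * tailProb n x)) := by
  rw [fmax_eq ha]
  gcongr
  calc (1 - tailProb n x) ^ (n - 1) ≤ exp (-tailProb n x) ^ (n - 1) :=
        pow_le_pow_left₀ (sub_pos.2 (tailProb_lt_one n x)).le (one_sub_le_exp_neg _) _
    _ = exp (-((n - 1) * tailProb n x)) := by
        rw [← exp_nat_mul, natCast_sub_one ha, mul_neg]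

lemma fmax_le_gumbelEnvelope (ha : 12 ≤ aSeq n) (hz : aSeq n / 2 ≤ zSeq n x) :
    fmax n x ≤ gumbelEnvelope x := by
  have ha₀ : 0 < aSeq n := by linarith
  have hn : 2 ≤ (n : ℝ) := by exact_mod_cast (one_lt_natCast ha₀)
  have hp := tailProb_pos n x
  calc fmax n x ≤ exp (-x - quadTerm n x) * exp (-((n - 1) * tailProb n x)) :=
        fmax_le_exp_neg_mul ha₀ x
    _ ≤ exp (-x) * exp (-((n - 1) * tailProb n x)) :=
        mul_le_mul_of_nonneg_right exp_neg_sub_quadTerm_le (exp_pos _).le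
    _ ≤ gumbelEnvelope x := by
        refine exp_neg_mul_exp_neg_le_gumbelEnvelope (by nlinarith) fun hx ↦ ?_
        nlinarith [exp_neg_half_le_natCast_mul_tailProb ha hz hx]

lemma gumbelPDF_mul_klFun_le_of_le (ha : 12 ≤ aSeq n) (hz : aSeq n / 2 ≤ zSeq n x) :
    gumbelPDF x * klFun (fmax n x / gumbelPDF x)
      ≤ deltaSeq n ^ 2 * (512 * ((1 + x ^ 2) ^ 2 * (1 + exp (-x)) ^ 4 * gumbelEnvelope x)) := by
  have hf : 0 < fmax n x := fmax_pos (by linarith) x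
  have hg := gumbelPDF_pos x
  have h_log : log (fmax n x / gumbelPDF x) ^ 2
      ≤ (deltaSeq n * (16 * (1 + x ^ 2) * (1 + exp (-x)) ^ 2)) ^ 2 :=
    sq_le_sq.2 ((abs_log_fmax_div_gumbelPDF_le (by linarith) hz).trans (le_abs_self _))
  calc gumbelPDF x * klFun (fmax n x / gumbelPDF x)
      ≤ gumbelPDF x
        * (log (fmax n x / gumbelPDF x) ^ 2 * (1 + fmax n x / gumbelPDF x)) := by
        gcongr; exact klFun_le_sq_log_mul (div_pos hf hg)
    _ = log (fmax n x / gumbelPDF x) ^ 2 * (gumbelPDF x + fmax n x) := by field_simp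
    _ ≤ (deltaSeq n * (16 * (1 + x ^ 2) * (1 + exp (-x)) ^ 2)) ^ 2
        * (gumbelEnvelope x + gumbelEnvelope x) := by
        gcongr
        exacts [gumbelPDF_le_gumbelEnvelope x, fmax_le_gumbelEnvelope ha hz]
    _ = _ := by ring

lemma exp_le_natCast_sub_one_mul_one_sub_stdNormalCDF (ha : 12 ≤ aSeq n) :
    exp (aSeq n ^ 2 / 4) ≤ (n - 1) * (1 - stdNormalCDF (aSeq n / 2)) := by
  set a := aSeq n
  have ha₀ : 0 < a := by linarith
  have hn : 2 ≤ (n : ℝ) := by exact_mod_cast (one_lt_natCast ha₀)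
  have h_growth : 6 * a ≤ exp (a ^ 2 / 8) := by
    have h_large : 18 ≤ a ^ 2 / 8 := by nlinarith
    nlinarith [quadratic_le_exp_of_nonneg (by positivity : 0 ≤ a ^ 2 / 8),
      mul_le_mul_of_nonneg_right h_large (by positivity : 0 ≤ a ^ 2 / 8)]
  have h_pdf : exp (-(a ^ 2 / 8)) / 3 ≤ stdNormalPDF (a / 2) := by
    have h_sqrt : √(2 * π) ≤ 3 := (sqrt_le_left (by norm_num)).2 (by linarith [pi_lt_four])
    rw [stdNormalPDF, show -(a / 2) ^ 2 / 2 = -(a ^ 2 / 8) by ring]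
    gcongr
  have h_frac : 1 / a ≤ a / 2 / (1 + (a / 2) ^ 2) := by
    rw [div_le_div_iff₀ ha₀ (by positivity)]
    nlinarith
  calc exp (a ^ 2 / 4)
      = exp (a ^ 2 / 2) / 2 * (exp (-(a ^ 2 / 8)) / 3 * (1 / a)) * (6 * a)
        / exp (a ^ 2 / 8) := by
        rw [show a ^ 2 / 4 = a ^ 2 / 2 + -(a ^ 2 / 8) - a ^ 2 / 8 by ring, exp_sub, exp_add]
        field_simp
        norm_num
    _ ≤ exp (a ^ 2 / 2) / 2 * (exp (-(a ^ 2 / 8)) / 3 * (1 / a)) := by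
        rw [div_le_iff₀ (exp_pos _)]; gcongr
    _ ≤ n / 2 * (stdNormalPDF (a / 2) * (a / 2 / (1 + (a / 2) ^ 2))) := by
        rw [← natCast_eq_exp ha₀]
        have := stdNormalPDF_pos (a / 2)
        gcongr
    _ ≤ (n - 1) * (1 - stdNormalCDF (a / 2)) :=
        mul_le_mul (by linarith) (stdNormalPDF_mul_le_one_sub_stdNormalCDF _)
          (mul_nonneg (stdNormalPDF_pos _).le (by positivity)) (by linarith)

lemma fmax_mul_exp_neg_le_of_lt (ha : 12 ≤ aSeq n) (hz : zSeq n x < aSeq n / 2) :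
    fmax n x * exp (-x) ≤ exp x := by
  have ha₀ : 0 < aSeq n := by linarith
  have hc : 1 ≤ cSeq n := one_le_cSeq (by linarith)
  have h_tail : exp (aSeq n ^ 2 / 4) ≤ (n - 1) * tailProb n x := by
    refine (exp_le_natCast_sub_one_mul_one_sub_stdNormalCDF ha).trans ?_
    rw [tailProb]
    gcongr
    exacts [by linarith [one_lt_natCast ha₀], strictMono_stdNormalCDF.monotone hz.le]
  have h_quad : -(3 * x) - quadTerm n x ≤ 9 / 2 * aSeq n ^ 2 := by
    have h_eq : 9 / 2 * aSeq n ^ 2 + 3 * (x - cSeq n) + quadTerm n x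
        = (x - cSeq n + 3 * aSeq n ^ 2) ^ 2 / (2 * aSeq n ^ 2) := by
      rw [quadTerm]; field_simp; ring
    have h_nonneg : 0 ≤ (x - cSeq n + 3 * aSeq n ^ 2) ^ 2 / (2 * aSeq n ^ 2) := by positivity
    linarith
  have h_growth : 9 / 2 * aSeq n ^ 2 ≤ exp (aSeq n ^ 2 / 4) := by
    have h_large : 36 ≤ aSeq n ^ 2 / 4 := by nlinarith
    nlinarith [quadratic_le_exp_of_nonneg (by positivity : 0 ≤ aSeq n ^ 2 / 4),
      mul_le_mul_of_nonneg_right h_large (by positivity : 0 ≤ aSeq n ^ 2 / 4)]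
  calc fmax n x * exp (-x)
      ≤ exp (-x - quadTerm n x) * exp (-((n - 1) * tailProb n x)) * exp (-x) := by
        gcongr; exact fmax_le_exp_neg_mul ha₀ x
    _ = exp (-x - quadTerm n x + -((n - 1) * tailProb n x) + -x) := by rw [exp_add, exp_add]
    _ ≤ exp x := exp_le_exp.2 (by linarith)

lemma one_le_deltaSeq_mul_of_lt (ha : 12 ≤ aSeq n) (hz : zSeq n x < aSeq n / 2) :
    1 ≤ deltaSeq n * (-6 * x) := by
  have ha₀ : 0 < aSeq n := by linarith
  have hx : 2 * aSeq n ^ 2 ≤ -6 * x := by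
    nlinarith [(zSeq_lt_half_iff ha₀).1 hz, cSeq_le ha₀]
  calc 1 = (2 * aSeq n ^ 2)⁻¹ * (2 * aSeq n ^ 2) := (inv_mul_cancel₀ (by positivity)).symm
    _ ≤ deltaSeq n * (-6 * x) :=
      mul_le_mul (inv_two_mul_aSeq_sq_le_deltaSeq (by linarith)) hx (by positivity)
        (deltaSeq_pos (by linarith)).le

lemma gumbelPDF_mul_klFun_le_of_lt (ha : 12 ≤ aSeq n) (hz : zSeq n x < aSeq n / 2) :
    gumbelPDF x * klFun (fmax n x / gumbelPDF x) ≤ exp x + gumbelPDF x := by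
  have ha₀ : 0 < aSeq n := by linarith
  have hf := fmax_pos ha₀ x
  have hg := gumbelPDF_pos x
  have h_log : log (fmax n x / gumbelPDF x) ≤ exp (-x) := by
    have h_neg : log (1 - tailProb n x) ≤ 0 :=
      log_nonpos (sub_pos.2 (tailProb_lt_one n x)).le (by linarith [tailProb_pos n x])
    rw [log_fmax_div_gumbelPDF ha₀]
    nlinarith [quadTerm_nonneg n x, one_lt_natCast ha₀]
  calc gumbelPDF x * klFun (fmax n x / gumbelPDF x)
      = fmax n x * log (fmax n x / gumbelPDF x) + gumbelPDF x - fmax n x := by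
        rw [klFun_apply]; field_simp
    _ ≤ fmax n x * exp (-x) + gumbelPDF x := by
        linarith [mul_le_mul_of_nonneg_left h_log hf.le]
    _ ≤ exp x + gumbelPDF x := by linarith [fmax_mul_exp_neg_le_of_lt ha hz]

lemma gumbelPDF_mul_klFun_le (ha : 12 ≤ aSeq n) (x : ℝ) :
    gumbelPDF x * klFun (fmax n x / gumbelPDF x) ≤ deltaSeq n ^ 2 * klBound x := by
  have h_env := gumbelEnvelope_pos x
  rw [klBound]
  rcases le_or_gt (aSeq n / 2) (zSeq n x) with hz | hz
  · refine (gumbelPDF_mul_klFun_le_of_le ha hz).trans ?_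
    gcongr
    exact le_add_of_nonneg_right (by positivity)
  · have h_one := one_le_deltaSeq_mul_of_lt ha hz
    have hδ : 0 < deltaSeq n := deltaSeq_pos (by linarith)
    have hx : x ≤ 0 := by nlinarith
    have h_poly : x ^ 2 * 1 ≤ (1 + x ^ 2) ^ 2 * (1 + exp (-x)) ^ 4 := by
      refine mul_le_mul ?_ (one_le_pow₀ (le_add_of_nonneg_right (exp_pos _).le)) one_pos.le
        (by positivity)
      nlinarith [sq_nonneg (x ^ 2)]
    calc gumbelPDF x * klFun (fmax n x / gumbelPDF x)
        ≤ 1 ^ 2 * (exp x + gumbelPDF x) := by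
          rw [one_pow, one_mul]; exact gumbelPDF_mul_klFun_le_of_lt ha hz
      _ ≤ (deltaSeq n * (-6 * x)) ^ 2 * (exp (-|x|) + gumbelEnvelope x) := by
          rw [abs_of_nonpos hx, neg_neg]
          gcongr
          · exact add_pos (exp_pos x) (gumbelPDF_pos x) |>.le
          · exact gumbelPDF_le_gumbelEnvelope x
      _ = deltaSeq n ^ 2 * (36 * (x ^ 2 * 1 * gumbelEnvelope x) + 36 * (x ^ 2 * exp (-|x|))) := by
          ring
      _ ≤ _ := by gcongr; norm_num

lemma one_add_sq_pow_three_le (x : ℝ) : (1 + x ^ 2) ^ 3 ≤ 18 ^ 3 * exp |x| := by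
  have h_quad : 1 + x ^ 2 ≤ 18 * exp (|x| / 3) := by
    nlinarith [quadratic_le_exp_of_nonneg (by positivity : 0 ≤ |x| / 3), sq_abs x, abs_nonneg x]
  calc (1 + x ^ 2) ^ 3 ≤ (18 * exp (|x| / 3)) ^ 3 := by gcongr
    _ = 18 ^ 3 * exp |x| := by rw [mul_pow, ← exp_nat_mul]; congr 2; push_cast; ring

lemma pow_mul_exp_neg_div_le {v r : ℝ} (hv : 0 ≤ v) (hr : 0 < r) (k : ℕ) :
    v ^ k * exp (-v / r) ≤ r ^ k * k.factorial := by
  have h := pow_div_factorial_le_exp _ (div_nonneg hv hr.le) k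
  rw [neg_div, exp_neg, ← div_eq_mul_inv, div_le_iff₀ (exp_pos _)]
  rw [div_le_iff₀ (by positivity), div_pow, div_le_iff₀ (by positivity)] at h
  linarith

lemma exists_exp_abs_mul_gumbelEnvelope_le :
    ∃ C, ∀ x : ℝ, exp |x| * ((1 + exp (-x)) ^ 4 * gumbelEnvelope x) ≤ C := by
  refine ⟨max (32 * (12 ^ 12 * Nat.factorial 12)) 32, fun x ↦ ?_⟩
  set v := exp (-x / 2)
  have hv : 0 < v := exp_pos _
  have hw : exp (-x) = v ^ 2 := by rw [← exp_nat_mul]; congr 1; push_cast; ring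
  rw [gumbelEnvelope, hw]
  rcases le_total x 0 with hx | hx
  · have hv₁ : 1 ≤ v ^ 2 := hw ▸ one_le_exp (by linarith)
    calc exp |x| * ((1 + v ^ 2) ^ 4 * (2 * v ^ 2 * exp (-v / 12)))
        ≤ v ^ 2 * ((v ^ 2 + v ^ 2) ^ 4 * (2 * v ^ 2 * exp (-v / 12))) := by
          rw [abs_of_nonpos hx, hw]
          gcongr
      _ = 32 * (v ^ 12 * exp (-v / 12)) := by ring
      _ ≤ 32 * (12 ^ 12 * Nat.factorial 12) :=
          mul_le_mul_of_nonneg_left (pow_mul_exp_neg_div_le hv.le (by norm_num) 12) (by norm_num)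
      _ ≤ _ := le_max_left _ _
  · have hv₁ : v ^ 2 ≤ 1 := hw ▸ exp_le_one_iff.2 (by linarith)
    have h_cancel : exp |x| * v ^ 2 = 1 := by
      rw [abs_of_nonneg hx, ← hw, ← exp_add, add_neg_cancel, exp_zero]
    calc exp |x| * ((1 + v ^ 2) ^ 4 * (2 * v ^ 2 * exp (-v / 12)))
        = (exp |x| * v ^ 2) * ((1 + v ^ 2) ^ 4 * (2 * exp (-v / 12))) := by ring
      _ ≤ 1 * ((1 + 1) ^ 4 * (2 * 1)) := by
          rw [h_cancel]
          gcongr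
          exact exp_le_one_iff.2 (by linarith)
      _ = 32 := by norm_num
      _ ≤ _ := le_max_right _ _

lemma integrable_klBound : Integrable klBound := by
  obtain ⟨C, hC⟩ := exists_exp_abs_mul_gumbelEnvelope_le
  have h_cont : Continuous klBound := by unfold klBound gumbelEnvelope; fun_prop
  refine (integrable_inv_one_add_sq.const_mul (512 * (18 ^ 3 * C) + 36 * 18 ^ 3)).mono'
    h_cont.aestronglyMeasurable (ae_of_all _ fun x ↦ ?_)
  have h_env := gumbelEnvelope_pos x
  rw [norm_of_nonneg (by unfold klBound; positivity), ← div_eq_mul_inv,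
    le_div_iff₀ (by positivity)]
  have h_cube := one_add_sq_pow_three_le x
  have h_first : (1 + x ^ 2) ^ 3 * ((1 + exp (-x)) ^ 4 * gumbelEnvelope x) ≤ 18 ^ 3 * C :=
    calc (1 + x ^ 2) ^ 3 * ((1 + exp (-x)) ^ 4 * gumbelEnvelope x)
        ≤ 18 ^ 3 * exp |x| * ((1 + exp (-x)) ^ 4 * gumbelEnvelope x) := by gcongr
      _ ≤ 18 ^ 3 * C := by rw [mul_assoc]; gcongr; exact hC x
  have h_second : x ^ 2 * (1 + x ^ 2) * exp (-|x|) ≤ 18 ^ 3 :=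
    calc x ^ 2 * (1 + x ^ 2) * exp (-|x|) ≤ (1 + x ^ 2) ^ 3 * exp (-|x|) := by
          gcongr; nlinarith [sq_nonneg x, sq_nonneg (x ^ 2), pow_nonneg (sq_nonneg x) 3]
      _ ≤ 18 ^ 3 * exp |x| * exp (-|x|) := by gcongr
      _ = 18 ^ 3 := by rw [mul_assoc, ← exp_add, add_neg_cancel, exp_zero, mul_one]
  calc klBound x * (1 + x ^ 2)
      = 512 * ((1 + x ^ 2) ^ 3 * ((1 + exp (-x)) ^ 4 * gumbelEnvelope x))
        + 36 * (x ^ 2 * (1 + x ^ 2) * exp (-|x|)) := by rw [klBound]; ring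
    _ ≤ 512 * (18 ^ 3 * C) + 36 * 18 ^ 3 := by gcongr

end Domination

section Limits

lemma tendsto_log_natCast_atTop : Tendsto (fun n : ℕ ↦ log n) atTop atTop :=
  tendsto_log_atTop.comp tendsto_natCast_atTop_atTop

lemma tendsto_aSeq_atTop : Tendsto aSeq atTop atTop :=
  tendsto_sqrt_atTop.comp (tendsto_log_natCast_atTop.const_mul_atTop two_pos)

lemma tendsto_cSeq_atTop : Tendsto cSeq atTop atTop :=
  tendsto_log_atTop.comp
    (tendsto_sqrt_atTop.comp (tendsto_log_natCast_atTop.const_mul_atTop (by positivity)))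

lemma tendsto_deltaSeq : Tendsto deltaSeq atTop (𝓝 0) := by
  have h_exp := (tendsto_pow_mul_exp_neg_atTop_nhds_zero 1).comp tendsto_cSeq_atTop
  have h := (h_exp.pow 2).const_mul π
  rw [zero_pow two_ne_zero, mul_zero] at h
  refine h.congr' ?_
  filter_upwards [tendsto_aSeq_atTop.eventually_gt_atTop 0] with n ha
  have h_sqrt : √(2 * π) ^ 2 = 2 * π := sq_sqrt (by positivity)
  rw [Function.comp_apply, pow_one, exp_neg, exp_cSeq ha, deltaSeq, mul_pow, inv_pow, mul_pow,
    h_sqrt]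
  field_simp

lemma tendsto_sub_cSeq_div_cSeq (x : ℝ) :
    Tendsto (fun n ↦ (x - cSeq n) / cSeq n) atTop (𝓝 (-1)) := by
  have h := (tendsto_cSeq_atTop.const_div_atTop x).sub_const 1
  rw [zero_sub] at h
  refine h.congr' ?_
  filter_upwards [tendsto_cSeq_atTop.eventually_gt_atTop 0] with n hc
  rw [sub_div, div_self hc.ne']

lemma tendsto_quadTerm_div_deltaSeq (x : ℝ) :
    Tendsto (fun n ↦ quadTerm n x / deltaSeq n) atTop (𝓝 1) := by
  have h := (tendsto_sub_cSeq_div_cSeq x).pow 2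
  rw [neg_one_sq] at h
  refine h.congr' ?_
  filter_upwards [tendsto_aSeq_atTop.eventually_gt_atTop 0] with n ha
  rw [quadTerm, deltaSeq, div_div_div_cancel_right₀ (by positivity), div_pow]

lemma tendsto_one_sub_exp_neg_div {ι : Type*} {l : Filter ι} {t δ : ι → ℝ} {L : ℝ}
    (ht : Tendsto t l (𝓝 0)) (htδ : Tendsto (fun i ↦ t i / δ i) l (𝓝 L)) :
    Tendsto (fun i ↦ (1 - exp (-t i)) / δ i) l (𝓝 L) := by
  have h_dslope : Tendsto (dslope exp 0) (𝓝 0) (𝓝 1) := by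
    have h := (continuousAt_dslope_same.2 differentiableAt_exp : ContinuousAt (dslope exp 0) 0)
    rwa [ContinuousAt, dslope_same, Real.deriv_exp, exp_zero] at h
  have h_neg := ht.neg
  rw [neg_zero] at h_neg
  have h := htδ.mul (h_dslope.comp h_neg)
  rw [mul_one] at h
  refine h.congr fun i ↦ ?_
  have h_exp := sub_smul_dslope exp 0 (-t i)
  rw [sub_zero, smul_eq_mul, exp_zero] at h_exp
  rw [Function.comp_apply, div_mul_eq_mul_div]
  congr 1
  linarith

lemma tendsto_one_sub_exp_neg_quadTerm_div_deltaSeq (x : ℝ) :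
    Tendsto (fun n ↦ (1 - exp (-quadTerm n x)) / deltaSeq n) atTop (𝓝 1) := by
  refine tendsto_one_sub_exp_neg_div ?_ (tendsto_quadTerm_div_deltaSeq x)
  have h := (tendsto_quadTerm_div_deltaSeq x).mul tendsto_deltaSeq
  rw [mul_zero] at h
  refine h.congr' ?_
  filter_upwards [tendsto_aSeq_atTop.eventually_ge_atTop 4] with n ha
  rw [div_mul_cancel₀ _ (deltaSeq_pos ha).ne']

lemma tendsto_tailError_div_deltaSeq (x : ℝ) :
    Tendsto (fun n ↦ tailError n x / deltaSeq n) atTop (𝓝 0) := by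
  have h_inv := tendsto_inv_atTop_zero.comp tendsto_cSeq_atTop
  have h := (((tendsto_sub_cSeq_div_cSeq x).abs.mul h_inv).const_mul 4).add
    ((h_inv.pow 2).const_mul 8)
  rw [mul_zero, mul_zero, zero_pow two_ne_zero, mul_zero, add_zero] at h
  refine h.congr' ?_
  filter_upwards [tendsto_aSeq_atTop.eventually_gt_atTop 0,
    tendsto_cSeq_atTop.eventually_gt_atTop 0] with n ha hc
  rw [Function.comp_apply, tailError, deltaSeq, abs_div, abs_of_pos hc]
  field_simp
  ring

lemma tendsto_inv_natCast_div_deltaSeq :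
    Tendsto (fun n : ℕ ↦ (n : ℝ)⁻¹ / deltaSeq n) atTop (𝓝 0) := by
  have h := ((tendsto_pow_mul_exp_neg_atTop_nhds_zero 1).comp
    tendsto_log_natCast_atTop).const_mul 4
  rw [mul_zero] at h
  refine squeeze_zero' ?_ ?_ h <;>
    filter_upwards [tendsto_aSeq_atTop.eventually_ge_atTop 4] with n ha
  · have := deltaSeq_pos ha
    positivity
  · have ha₀ : 0 < aSeq n := by linarith
    have hn := one_lt_natCast ha₀
    calc (n : ℝ)⁻¹ / deltaSeq n ≤ (n : ℝ)⁻¹ / (2 * aSeq n ^ 2)⁻¹ := by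
          gcongr; exact inv_two_mul_aSeq_sq_le_deltaSeq ha
      _ = 4 * (log n ^ 1 * exp (-log n)) := by
          rw [exp_neg, exp_log (by linarith), aSeq_sq ha₀, div_inv_eq_mul]; ring

lemma eventually_half_aSeq_le_zSeq (x : ℝ) : ∀ᶠ n in atTop, aSeq n / 2 ≤ zSeq n x := by
  filter_upwards [tendsto_aSeq_atTop.eventually_ge_atTop 4,
    tendsto_aSeq_atTop.eventually_ge_atTop (-12 * x)] with n ha hx
  have ha₀ : 0 < aSeq n := by linarith
  refine not_lt.1 fun hz ↦ ?_
  nlinarith [(zSeq_lt_half_iff ha₀).1 hz, cSeq_le ha₀]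

lemma tendsto_log_fmax_div_gumbelPDF_div_deltaSeq (x : ℝ) :
    Tendsto (fun n ↦ log (fmax n x / gumbelPDF x) / deltaSeq n) atTop (𝓝 (exp (-x) - 1)) := by
  set w := exp (-x)
  have h_main : Tendsto (fun n ↦ (w * (1 - exp (-quadTerm n x)) - quadTerm n x) / deltaSeq n) atTop
      (𝓝 (w - 1)) := by
    have h := ((tendsto_one_sub_exp_neg_quadTerm_div_deltaSeq x).const_mul w).sub
      (tendsto_quadTerm_div_deltaSeq x)
    rw [mul_one] at h
    exact h.congr fun n ↦ by rw [← mul_div_assoc, ← sub_div]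
  have h_error := ((tendsto_tailError_div_deltaSeq x).const_mul w).add
    (tendsto_inv_natCast_div_deltaSeq.const_mul (8 * w ^ 2 + 2 * w))
  rw [mul_zero, mul_zero, add_zero] at h_error
  refine (tendsto_iff_of_dist (squeeze_zero' (Eventually.of_forall fun _ ↦ dist_nonneg) ?_
    h_error)).1 h_main
  filter_upwards [tendsto_aSeq_atTop.eventually_ge_atTop 4, eventually_half_aSeq_le_zSeq x]
    with n ha hz
  have hδ := deltaSeq_pos ha
  rw [dist_comm, Real.dist_eq, ← sub_div, abs_div, abs_of_pos hδ]
  calc _ ≤ (w * tailError n x + (8 * w ^ 2 + 2 * w) / n) / deltaSeq n := by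
        gcongr; exact abs_log_fmax_div_gumbelPDF_sub_le (by linarith) hz
    _ = _ := by ring

lemma tendsto_deltaSeq_sq_div : Tendsto (fun n : ℕ ↦ deltaSeq n ^ 2 /
    (log (log n) ^ 4 / (512 * log n ^ 2))) atTop (𝓝 2) := by
  have h_loglog := tendsto_log_atTop.comp tendsto_log_natCast_atTop
  have h := (((h_loglog.const_div_atTop (log (4 * π))).const_add 1).pow 4).const_mul 2
  rw [add_zero, one_pow, mul_one] at h
  refine h.congr' ?_
  filter_upwards [tendsto_aSeq_atTop.eventually_gt_atTop 0, h_loglog.eventually_gt_atTop 0]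
    with n ha hl
  have := log_natCast_pos ha
  rw [Function.comp_apply] at hl
  rw [Function.comp_apply, deltaSeq, aSeq_sq ha, cSeq_eq ha]
  field_simp
  ring

end Limits

/-- The Kullback–Leibler divergence of the law of the normalized Gaussian maximum `Y_n`
from the standard Gumbel distribution is `(log log n)⁴/(512 (log n)²) · (1 + o(1))`. -/
theorem kl_gumbel_max_gaussian :
    Tendsto (fun n : ℕ =>
        (∫ x : ℝ, fmax n x * Real.log (fmax n x / gumbelPDF x)) /
          ((Real.log (Real.log n)) ^ 4 / (512 * (Real.log n) ^ 2)))
      atTop (nhds 1) := by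
  have h_large : ∀ᶠ n in atTop, 12 ≤ aSeq n := tendsto_aSeq_atTop.eventually_ge_atTop 12
  have h_pos : ∀ᶠ n in atTop, 0 < aSeq n := tendsto_aSeq_atTop.eventually_gt_atTop 0
  have hδ₀ : ∀ᶠ n in atTop, deltaSeq n ≠ 0 :=
    h_large.mono fun n ha ↦ (deltaSeq_pos (by linarith)).ne'
  have h_kl : Tendsto (fun n ↦ (∫ x, fmax n x * log (fmax n x / gumbelPDF x)) / deltaSeq n ^ 2)
      atTop (𝓝 (1 / 2)) := by
    rw [← integral_gumbelPDF_mul_sq_half]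
    exact tendsto_integral_mul_log_div_div_sq (h_pos.mono fun n ↦ integrable_fmax)
      (h_pos.mono fun n ↦ fmax_pos) integrable_gumbelPDF gumbelPDF_pos
      (h_pos.mono fun n ha ↦ (integral_fmax ha).trans integral_gumbelPDF.symm)
      tendsto_deltaSeq hδ₀ integrable_klBound (h_large.mono fun n ↦ gumbelPDF_mul_klFun_le)
      tendsto_log_fmax_div_gumbelPDF_div_deltaSeq
  have h := h_kl.mul tendsto_deltaSeq_sq_div
  rw [one_div_mul_cancel two_ne_zero] at h
  refine h.congr' ?_
  filter_upwards [hδ₀] with n hδ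
  exact div_mul_div_cancel₀ (pow_ne_zero 2 hδ)
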